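/- For all integers d ≥ 0 and 0 ≤ k ≤ 3(d+1), one has ((−1)^{d+1}/2)·∑_{q ≥ 1} [ C(10+6d−2k, 6q−(k+1)) − 4·C(8+6d−2k, 6q−(k+2)) ] = (3^{3(d+1)−k} + (−1)^d)/2, where the sum over positive integers q has only finitely many nonzero terms. -/

import Mathlib

/-!
Put `m = 3 (d + 1) - k`. The two binomial coefficients are `C(2m+4, m+2-3d+6q)` and
`C(2m+2, m+1-3d+6q)`, and both vanish for `q < 0`, so the sum over `q : ℕ` is a sum over all of `ℤ`,
that is, over a residue class of lower indices modulo `6` (`binomSum`). Writing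
`G n t = ∑ q : ℤ, C(2n, n + t + 6q)`, which is `6`-periodic in `t`, Pascal's rule applied twice gives
`G (n + 1) t = G n (t - 1) + 2 * G n t + G n (t + 1)` (`binomSum_step`). This circulant operator has
eigenvalues `2 + 2 cos (π j / 3) = 4, 3, 1, 0, 1, 3`, whence for `n ≥ 1`
`6 * G n t = 4 ^ n + 2 cos (π t / 3) * 3 ^ n + 2 cos (2 π t / 3)` (`binomSum_closed`).
In `G (m + 2) t - 4 * G (m + 1) t` the eigenvalue `4` cancels; only `t ≡ 3 d` modulo `6` is needed,
that is, `t = 0` for even `d` and `t = 3` for odd `d`.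
-/

/-- Binomial coefficient with integer arguments, with the convention
`C a b = 0` unless `0 ≤ b ≤ a`. -/
noncomputable def binomR (a b : ℤ) : ℝ :=
  if 0 ≤ b ∧ b ≤ a then ((a.toNat.choose b.toNat : ℕ) : ℝ) else 0

/-- The sum of the binomial coefficients `C(a, i)` over all `i ≡ b` modulo `6`. -/
noncomputable def binomSum (a b : ℤ) : ℝ := ∑' q : ℤ, binomR a (b + 6 * q)

theorem binomR_eq_zero {a b : ℤ} (h : ¬ (0 ≤ b ∧ b ≤ a)) : binomR a b = 0 := if_neg h

theorem binomR_natCast (n i : ℕ) : binomR n i = (n.choose i : ℝ) := by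
  unfold binomR
  split_ifs with h
  · simp
  · rw [Nat.choose_eq_zero_of_lt (by omega)]
    simp

/-- Pascal's rule; the convention of vanishing outside `0 ≤ b ≤ a` makes it valid for every `b`. -/
theorem binomR_pascal (n : ℕ) (b : ℤ) :
    binomR ((n : ℤ) + 1) b = binomR n b + binomR n (b - 1) := by
  rcases lt_or_ge b 0 with hb | hb
  · rw [binomR_eq_zero (by omega), binomR_eq_zero (by omega), binomR_eq_zero (by omega), add_zero]
  · lift b to ℕ using hb
    rcases b with _ | i
    · rw [binomR_eq_zero (b := ((0 : ℕ) : ℤ) - 1) (by omega)]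
      have := binomR_natCast (n + 1) 0
      push_cast at this
      have h' := binomR_natCast n 0
      simp_all
    · have h := binomR_natCast (n + 1) (i + 1)
      have h' := binomR_natCast n (i + 1)
      have h'' := binomR_natCast n i
      push_cast at h h' ⊢
      rw [add_sub_cancel_right, h, h', h'', Nat.choose_succ_succ]
      push_cast
      ring

theorem summable_binomR (a b : ℤ) : Summable fun q : ℤ => binomR a (b + 6 * q) := by
  apply summable_of_hasFiniteSupport
  apply (Set.finite_Icc (-|b|) (|a| + |b|)).subset
  intro q hq
  by_contra hq'
  apply hq
  apply binomR_eq_zero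
  rintro ⟨h1, h2⟩
  apply hq'
  have := neg_abs_le b
  have := le_abs_self b
  have := le_abs_self a
  constructor <;> omega

theorem binomSum_pascal (n : ℕ) (b : ℤ) :
    binomSum ((n : ℤ) + 1) b = binomSum n b + binomSum n (b - 1) := by
  unfold binomSum
  rw [← (summable_binomR _ _).tsum_add (summable_binomR _ _)]
  refine tsum_congr fun q => ?_
  rw [binomR_pascal, show b + 6 * q - 1 = b - 1 + 6 * q by ring]

theorem binomSum_periodic (a b j : ℤ) : binomSum a (b + 6 * j) = binomSum a b := by
  unfold binomSum
  rw [← (Equiv.addLeft j).tsum_eq fun q : ℤ => binomR a (b + 6 * q)]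
  refine tsum_congr fun q => ?_
  rw [Equiv.coe_addLeft, mul_add, add_assoc]

/-- The central sums `G n t = ∑ q : ℤ, C(2n, n + t + 6q)` evolve by a circulant operator. -/
theorem binomSum_step (n : ℕ) (t : ℤ) :
    binomSum (2 * ((n : ℤ) + 1)) ((n : ℤ) + 1 + t) =
      binomSum (2 * n) (n + (t - 1)) + 2 * binomSum (2 * n) (n + t)
        + binomSum (2 * n) (n + (t + 1)) := by
  have h1 := binomSum_pascal (2 * n + 1) ((n : ℤ) + 1 + t)
  have h2 := binomSum_pascal (2 * n) ((n : ℤ) + 1 + t)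
  have h3 := binomSum_pascal (2 * n) ((n : ℤ) + 1 + t - 1)
  push_cast at h1 h2 h3
  rw [show 2 * ((n : ℤ) + 1) = 2 * n + 1 + 1 by ring, h1, h2, h3,
    show (n : ℤ) + 1 + t - 1 - 1 = n + (t - 1) by ring,
    show (n : ℤ) + 1 + t - 1 = n + t by ring, show (n : ℤ) + 1 + t = n + (t + 1) by ring]
  ring

theorem binomSum_zero_zero : binomSum 0 0 = 1 := by
  unfold binomSum
  rw [tsum_eq_single 0 fun q hq => binomR_eq_zero (by omega)]
  simp [binomR]

theorem binomSum_zero_of_lt {t : ℤ} (h0 : 0 < t) (h6 : t < 6) : binomSum 0 t = 0 := by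
  unfold binomSum
  rw [← tsum_zero (α := ℝ) (β := ℤ)]
  exact tsum_congr fun q => binomR_eq_zero (by omega)

/-- The eigenvector expansion of the central sums on a full period `t = 0, …, 5`. It starts at
`n + 1` because the eigenvalue `0` contributes only to the zeroth row. -/
theorem binomSum_closed (n : ℕ) :
    6 * binomSum (2 * ((n : ℤ) + 1)) ((n : ℤ) + 1 + 0) = 4 ^ (n + 1) + 2 * 3 ^ (n + 1) + 2 ∧
    6 * binomSum (2 * ((n : ℤ) + 1)) ((n : ℤ) + 1 + 1) = 4 ^ (n + 1) + 3 ^ (n + 1) - 1 ∧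
    6 * binomSum (2 * ((n : ℤ) + 1)) ((n : ℤ) + 1 + 2) = 4 ^ (n + 1) - 3 ^ (n + 1) - 1 ∧
    6 * binomSum (2 * ((n : ℤ) + 1)) ((n : ℤ) + 1 + 3) = 4 ^ (n + 1) - 2 * 3 ^ (n + 1) + 2 ∧
    6 * binomSum (2 * ((n : ℤ) + 1)) ((n : ℤ) + 1 + 4) = 4 ^ (n + 1) - 3 ^ (n + 1) - 1 ∧
    6 * binomSum (2 * ((n : ℤ) + 1)) ((n : ℤ) + 1 + 5) = 4 ^ (n + 1) + 3 ^ (n + 1) - 1 := by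
  -- Periodicity identifies the neighbours `-1` and `6` of the period with its two ends.
  have key : ∀ N : ℕ, binomSum (2 * N) (N + (-1)) = binomSum (2 * N) (N + 5) ∧
      binomSum (2 * N) (N + 6) = binomSum (2 * N) (N + 0) := fun N => by
    rw [← binomSum_periodic _ (N + (-1)) 1, ← binomSum_periodic _ (N + 0) 1]
    constructor <;> congr 1 <;> ring
  induction n with
  | zero =>
    obtain ⟨k1, k2⟩ := key 0
    have s0 := binomSum_step 0 0
    have s1 := binomSum_step 0 1
    have s2 := binomSum_step 0 2
    have s3 := binomSum_step 0 3
    have s4 := binomSum_step 0 4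
    have s5 := binomSum_step 0 5
    have z1 := binomSum_zero_of_lt (t := 1) (by norm_num) (by norm_num)
    have z2 := binomSum_zero_of_lt (t := 2) (by norm_num) (by norm_num)
    have z3 := binomSum_zero_of_lt (t := 3) (by norm_num) (by norm_num)
    have z4 := binomSum_zero_of_lt (t := 4) (by norm_num) (by norm_num)
    have z5 := binomSum_zero_of_lt (t := 5) (by norm_num) (by norm_num)
    have z0 := binomSum_zero_zero
    norm_num at k1 k2 s0 s1 s2 s3 s4 s5 ⊢
    rw [z5] at k1
    rw [z0] at k2
    simp only [z0, z1, z2, z3, z4, z5, k1, k2] at s0 s1 s2 s3 s4 s5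
    rw [s0, s1, s2, s3, s4, s5]
    norm_num
  | succ n ih =>
    obtain ⟨k1, k2⟩ := key (n + 1)
    have s0 := binomSum_step (n + 1) 0
    have s1 := binomSum_step (n + 1) 1
    have s2 := binomSum_step (n + 1) 2
    have s3 := binomSum_step (n + 1) 3
    have s4 := binomSum_step (n + 1) 4
    have s5 := binomSum_step (n + 1) 5
    obtain ⟨i0, i1, i2, i3, i4, i5⟩ := ih
    push_cast at k1 k2 s0 s1 s2 s3 s4 s5 ⊢
    rw [s0, s1, s2, s3, s4, s5, pow_succ 4 (n + 1), pow_succ 3 (n + 1)]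
    refine ⟨?_, ?_, ?_, ?_, ?_, ?_⟩ <;> linarith

/-- The two-point intersection numbers `⟨x₁^{8+6d−2k} x₂^k⟩` on `Hol_d(CP¹ → G₂(C⁶))`
are the Pell-type numbers `(3^{3(d+1)−k} + (−1)^d)/2`. -/
theorem two_point_pell (d k : ℕ) (hk : k ≤ 3 * (d + 1)) :
    ((-1 : ℝ) ^ (d + 1) / 2) * ∑' q : ℕ,
        (binomR (10 + 6 * (d : ℤ) - 2 * (k : ℤ)) (6 * ((q : ℤ) + 1) - ((k : ℤ) + 1))
          - 4 * binomR (8 + 6 * (d : ℤ) - 2 * (k : ℤ)) (6 * ((q : ℤ) + 1) - ((k : ℤ) + 2)))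
      = ((3 : ℝ) ^ (3 * (d + 1) - k) + (-1 : ℝ) ^ d) / 2 := by
  obtain ⟨m, hm⟩ : ∃ m, m = 3 * (d + 1) - k := ⟨_, rfl⟩
  have hkm : (k : ℤ) = 3 * d + 3 - m := by omega
  rw [← hm]
  have hsum : ∑' q : ℕ,
        (binomR (10 + 6 * (d : ℤ) - 2 * (k : ℤ)) (6 * ((q : ℤ) + 1) - ((k : ℤ) + 1))
          - 4 * binomR (8 + 6 * (d : ℤ) - 2 * (k : ℤ)) (6 * ((q : ℤ) + 1) - ((k : ℤ) + 2)))
      = binomSum (2 * ((m : ℤ) + 1 + 1)) ((m : ℤ) + 1 + 1 - 3 * d)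
        - 4 * binomSum (2 * ((m : ℤ) + 1)) ((m : ℤ) + 1 - 3 * d) := by
    unfold binomSum
    rw [← tsum_mul_left, ← (summable_binomR _ _).tsum_sub ((summable_binomR _ _).mul_left 4)]
    rw [← (Nat.cast_injective (R := ℤ)).tsum_eq]
    · refine tsum_congr fun q => ?_
      rw [hkm]
      congr 2
      · ring
      · ring
      · congr 1 <;> ring
    · intro q hq
      by_contra hq'
      have hneg : q < 0 := by
        by_contra h
        exact hq' ⟨q.toNat, by omega⟩
      apply hq
      -- Both lower indices are negative when `q < 0`.
      simp only
      rw [binomR_eq_zero (by omega), binomR_eq_zero (by omega)]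
      norm_num
  rw [hsum]
  obtain ⟨a0, -, -, a3, -, -⟩ := binomSum_closed m
  obtain ⟨b0, -, -, b3, -, -⟩ := binomSum_closed (m + 1)
  push_cast at b0 b3
  rcases Nat.even_or_odd' d with ⟨e, rfl | rfl⟩
  · rw [← binomSum_periodic _ ((m : ℤ) + 1 + 1 - _) e, ← binomSum_periodic _ ((m : ℤ) + 1 - _) e]
    push_cast
    rw [show (m : ℤ) + 1 + 1 - 3 * (2 * e) + 6 * e = m + 1 + 1 + 0 by ring,
      show (m : ℤ) + 1 - 3 * (2 * e) + 6 * e = m + 1 + 0 by ring]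
    have h1 : (-1 : ℝ) ^ (2 * e) = 1 := by simp
    rw [pow_succ, h1]
    simp only [pow_succ] at a0 b0
    linarith
  · rw [← binomSum_periodic _ ((m : ℤ) + 1 + 1 - _) (e + 1),
      ← binomSum_periodic _ ((m : ℤ) + 1 - _) (e + 1)]
    push_cast
    rw [show (m : ℤ) + 1 + 1 - 3 * (2 * e + 1) + 6 * (e + 1) = m + 1 + 1 + 3 by ring,
      show (m : ℤ) + 1 - 3 * (2 * e + 1) + 6 * (e + 1) = m + 1 + 3 by ring]
    have h1 : (-1 : ℝ) ^ (2 * e) = 1 := by simp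
    rw [pow_succ, pow_succ, h1]
    simp only [pow_succ] at a3 b3
    linarith
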